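/- arXiv:2005.10931 — 2 statements merged into one kernel-verified Lean document; each statement's English description precedes it below -/
import Mathlib

section
/- Let F_q be the finite field with q elements, F_{q^h} an extension, and α ∈ F_{q^h} \ F_q with [F_q(α):F_q] = s. Let 1 ≤ t1 ≤ t2 with t1 + t2 = k ≤ s + 1. Let U = {(p(α), r(α)) : p, r ∈ F_q[X], deg(p) ≤ t1−1, deg(r) ≤ t2−1} and L = L_U ⊆ PG(1,q^h). Then, with respect to U: for each i ∈ {1, …, t1−1} there are exactly q^{k−2i+1} − q^{k−2i−1} points of L of weight i; if t1 < t2 there are exactly q^{t2−t1+1} points of weight t1, exactly one point of weight t2, and no points of any other weight; if t1 = t2 there are exactly q + 1 points of weight t1 and no points of any other weight. -/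
/-!
Write `V(a, b)` for the space of vectors `(p(α), r(α))` with `deg p < a`, `deg r < b`
(`polySpace`), so that `U = V(t1, t2)`. When `a + b ≤ s + 1`, two vectors of `V(a, b)` on the same
point come from proportional pairs of polynomials, since the cross products have degree below `s`
(`cross_mul_eq`).

The central fact is that passing from `V(a + 1, b + 1)` to `V(a, b)` lowers every positive weight
by exactly one (`weightOf_polySpace_succ`). On the vectors lying on one point, the pair of top
coefficients takes values in a line of `F²` by proportionality; it is not identically zero, as
multiplication by `X` would otherwise raise degrees indefinitely; and its kernel is the part in
`V(a, b)`. Hence the points of weight more than `j` for `V(t1, t2)` are exactly the points of the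
linear set of `V(t1 - j, t2 - j)` (`linearSet_polySpace`).

The nonzero vectors of `V(a, b)` are partitioned by the points, so the sum of `q ^ w(P) - 1` over
the points `P` is `q ^ (a + b) - 1` (`sum_weightOf`). Comparing this for `V(a + 1, b + 1)` and
`V(a, b)` gives `q ^ (a + b + 1) + 1` points for the former (`ncard_linearSet_polySpace`). Therefore
there are `q ^ (k - 2 * j + 1) + 1` points of weight at least `j` for `1 ≤ j ≤ t1`, and the weight
distribution follows by taking differences, the points of weight more than `t1` being those of
`V(0, t2 - t1)`.
-/

open Polynomial

/-- The `F_q`-linear set `L_U = {⟨u⟩ : u ∈ U \ {0}}` determined by an `F`-subspace `U` of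
`E^n`; points of `PG(n-1, E)` are modelled as the `1`-dimensional `E`-subspaces
`span E {u}`, `u ≠ 0`. -/
def linearSet {F E : Type*} [Field F] [Field E] [Algebra F E] {n : ℕ}
    (U : Submodule F (Fin n → E)) : Set (Submodule E (Fin n → E)) :=
  {W | ∃ u ∈ U, u ≠ 0 ∧ W = Submodule.span E {u}}

/-- The *weight* (with respect to `U`) of a point `W` of `PG(n-1, E)`:
the `F`-dimension of `U ∩ W`. -/
noncomputable def weightOf {F E : Type*} [Field F] [Field E] [Algebra F E] {n : ℕ}
    (U : Submodule F (Fin n → E)) (W : Submodule E (Fin n → E)) : ℕ :=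
  Module.finrank F ↥(U ⊓ Submodule.restrictScalars F W)

section PolySpace

variable {F E : Type*} [Field F] [Field E] [Algebra F E]

/-! ### The spaces of evaluated polynomial pairs -/

/-- The map `(p, r) ↦ (p(α), r(α))` on pairs of polynomials with `deg p < a`, `deg r < b`. -/
noncomputable def evalPair (α : E) (a b : ℕ) :
    (degreeLT F a × degreeLT F b) →ₗ[F] (Fin 2 → E) where
  toFun x := ![aeval α (x.1 : F[X]), aeval α (x.2 : F[X])]
  map_add' x y := by ext i; fin_cases i <;> simp
  map_smul' c x := by ext i; fin_cases i <;> simp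

/-- The `F`-subspace of all `(p(α), r(α))` with `deg p < a` and `deg r < b`. Either bound may be
`0`, which forces the corresponding coordinate to vanish. -/
noncomputable def polySpace (F : Type*) {E : Type*} [Field F] [Field E] [Algebra F E]
    (α : E) (a b : ℕ) : Submodule F (Fin 2 → E) :=
  LinearMap.range (evalPair (F := F) α a b)

lemma mem_polySpace {α : E} {a b : ℕ} {v : Fin 2 → E} :
    v ∈ polySpace F α a b ↔ ∃ p r : F[X], p.degree < a ∧ r.degree < b ∧
      v = ![aeval α p, aeval α r] := by
  constructor
  · rintro ⟨x, rfl⟩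
    exact ⟨x.1, x.2, mem_degreeLT.1 x.1.2, mem_degreeLT.1 x.2.2, rfl⟩
  · rintro ⟨p, r, hp, hr, rfl⟩
    exact ⟨(⟨p, mem_degreeLT.2 hp⟩, ⟨r, mem_degreeLT.2 hr⟩), rfl⟩

lemma polySpace_mono (α : E) {a b a' b' : ℕ} (ha : a ≤ a') (hb : b ≤ b') :
    polySpace F α a b ≤ polySpace F α a' b' := by
  intro v hv
  obtain ⟨p, r, hp, hr, rfl⟩ := mem_polySpace.1 hv
  exact mem_polySpace.2 ⟨p, r, hp.trans_le (by exact_mod_cast ha),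
    hr.trans_le (by exact_mod_cast hb), rfl⟩

lemma eq_zero_of_aeval_eq_zero {α : E} {p : F[X]}
    (hp : p.degree < ((minpoly F α).natDegree : ℕ)) (h : aeval α p = 0) : p = 0 := by
  by_contra h0
  have hle := natDegree_le_of_dvd (minpoly.dvd F α h) h0
  rw [degree_eq_natDegree h0, Nat.cast_lt] at hp
  omega

lemma eq_of_aeval_eq {α : E} {p p' : F[X]}
    (hp : p.degree < ((minpoly F α).natDegree : ℕ))
    (hp' : p'.degree < ((minpoly F α).natDegree : ℕ)) (h : aeval α p = aeval α p') : p = p' := by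
  rw [← sub_eq_zero]
  refine eq_zero_of_aeval_eq_zero (α := α) ?_ (by rw [map_sub, h, sub_self])
  rw [← mem_degreeLT] at *
  exact Submodule.sub_mem _ hp hp'

lemma finrank_polySpace {α : E} {a b : ℕ} (ha : a ≤ (minpoly F α).natDegree)
    (hb : b ≤ (minpoly F α).natDegree) :
    Module.finrank F (polySpace F α a b) = a + b := by
  have hinj : Function.Injective (evalPair (F := F) α a b) := by
    rw [← LinearMap.ker_eq_bot, LinearMap.ker_eq_bot']
    rintro ⟨⟨p, hp⟩, ⟨r, hr⟩⟩ h
    have h0 := congrFun h 0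
    have h1 := congrFun h 1
    simp only [evalPair, LinearMap.coe_mk, AddHom.coe_mk, Matrix.cons_val_zero,
      Matrix.cons_val_one, Pi.zero_apply] at h0 h1
    have hp' : p = 0 := eq_zero_of_aeval_eq_zero
      ((mem_degreeLT.1 hp).trans_le (by exact_mod_cast ha)) h0
    have hr' : r = 0 := eq_zero_of_aeval_eq_zero
      ((mem_degreeLT.1 hr).trans_le (by exact_mod_cast hb)) h1
    subst hp' hr'
    rfl
  have : Module.Finite F (degreeLT F a) := Module.Finite.equiv (degreeLTEquiv F a).symm
  have : Module.Finite F (degreeLT F b) := Module.Finite.equiv (degreeLTEquiv F b).symm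
  rw [polySpace, LinearMap.finrank_range_of_inj hinj, Module.finrank_prod,
    (degreeLTEquiv F a).finrank_eq, (degreeLTEquiv F b).finrank_eq]
  simp

/-! ### Weights under lowering of the degree bounds -/

/-- Proportionality over `E` of two vectors of `polySpace` lifts to the polynomials, because the
cross products have degree less than that of the minimal polynomial of `α`. -/
lemma cross_mul_eq {α : E} {a b : ℕ} (hab : a + b + 1 ≤ (minpoly F α).natDegree)
    {p r p' r' : F[X]} (hp : p.degree < (a + 1 : ℕ)) (hr : r.degree < (b + 1 : ℕ))
    (hp' : p'.degree < (a + 1 : ℕ)) (hr' : r'.degree < (b + 1 : ℕ)) {u : Fin 2 → E}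
    (h : ![aeval α p, aeval α r] ∈ Submodule.span E {u})
    (h' : ![aeval α p', aeval α r'] ∈ Submodule.span E {u}) :
    p * r' = p' * r := by
  obtain ⟨c, hc⟩ := Submodule.mem_span_singleton.1 h
  obtain ⟨d, hd⟩ := Submodule.mem_span_singleton.1 h'
  have c0 := congrFun hc 0
  have c1 := congrFun hc 1
  have d0 := congrFun hd 0
  have d1 := congrFun hd 1
  simp only [Pi.smul_apply, smul_eq_mul, Matrix.cons_val_zero, Matrix.cons_val_one] at c0 c1 d0 d1
  rw [← sub_eq_zero]
  rw [degree_lt_iff_coeff_zero] at hp hr hp' hr'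
  have np := natDegree_le_iff_coeff_eq_zero.2 fun N hN => hp N hN
  have nr := natDegree_le_iff_coeff_eq_zero.2 fun N hN => hr N hN
  have np' := natDegree_le_iff_coeff_eq_zero.2 fun N hN => hp' N hN
  have nr' := natDegree_le_iff_coeff_eq_zero.2 fun N hN => hr' N hN
  apply eq_zero_of_aeval_eq_zero (α := α)
  · have h1 : (p * r' - p' * r).natDegree ≤ a + b :=
      (natDegree_sub_le _ _).trans (max_le (natDegree_mul_le_of_le np nr')
        (natDegree_mul_le_of_le np' nr))
    calc _ ≤ ((p * r' - p' * r).natDegree : WithBot ℕ) := degree_le_natDegree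
      _ < _ := by exact_mod_cast (by omega)
  · simp only [map_sub, map_mul, ← c0, ← c1, ← d0, ← d1]
    ring

lemma finrank_eq_add_one {V : Type*} [AddCommGroup V] [Module F V] [FiniteDimensional F V]
    {T T' : Submodule F V} (hle : T ≤ T') {v : V} (hv : v ∈ T') (hvT : v ∉ T)
    (h : ∀ w ∈ T', ∃ c : F, w - c • v ∈ T) :
    Module.finrank F T' = Module.finrank F T + 1 := by
  have hsup : T' = T ⊔ Submodule.span F {v} := by
    apply le_antisymm
    · intro w hw
      obtain ⟨c, hc⟩ := h w hw
      rw [← sub_add_cancel w (c • v)]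
      exact Submodule.add_mem_sup hc (Submodule.smul_mem _ _ (Submodule.mem_span_singleton_self v))
    · exact sup_le hle ((Submodule.span_singleton_le_iff_mem _ _).2 hv)
  have hinf : T ⊓ Submodule.span F {v} = ⊥ := by
    rw [← disjoint_iff, Submodule.disjoint_span_singleton]
    intro hh
    exact absurd hh hvT
  have hv0 : v ≠ 0 := fun h0 => hvT (by rw [h0]; exact T.zero_mem)
  have := Submodule.finrank_sup_add_finrank_inf_eq T (Submodule.span F {v})
  rw [hinf, finrank_bot, finrank_span_singleton hv0, ← hsup] at this
  simpa using this

lemma degree_lt_of_coeff_eq_zero {p : F[X]} {a : ℕ} (hp : p.degree < (a + 1 : ℕ))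
    (h : p.coeff a = 0) : p.degree < (a : ℕ) := by
  rw [degree_lt_iff_coeff_zero] at hp ⊢
  intro m hm
  rcases hm.eq_or_lt with rfl | hm
  · exact h
  · exact hp m hm

/-- Lowering both degree bounds by one lowers every positive weight by exactly one. The pair of
top coefficients is a linear map to `F²` with kernel the smaller space; on a single point its image
is at most a line since the polynomials are proportional, and it is nonzero since multiplying by
`X` stays within the point. -/
lemma weightOf_polySpace_succ [Finite E] {α : E} {a b : ℕ}
    (hab : a + b + 1 ≤ (minpoly F α).natDegree) (u : Fin 2 → E)
    (hw : polySpace F α (a + 1) (b + 1) ⊓ (Submodule.span E {u}).restrictScalars F ≠ ⊥) :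
    weightOf (polySpace F α (a + 1) (b + 1)) (Submodule.span E {u}) =
      weightOf (polySpace F α a b) (Submodule.span E {u}) + 1 := by
  have hle : polySpace F α a b ⊓ (Submodule.span E {u}).restrictScalars F ≤
      polySpace F α (a + 1) (b + 1) ⊓ (Submodule.span E {u}).restrictScalars F :=
    inf_le_inf_right _ (polySpace_mono α (Nat.le_succ a) (Nat.le_succ b))
  obtain ⟨v, hv, hvT⟩ : ∃ v ∈ polySpace F α (a + 1) (b + 1) ⊓
      (Submodule.span E {u}).restrictScalars F,
      v ∉ polySpace F α a b ⊓ (Submodule.span E {u}).restrictScalars F := by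
    by_contra! hcon
    obtain ⟨v, hv, hv0⟩ := Submodule.exists_mem_ne_zero_of_ne_bot hw
    obtain ⟨hv1, hv2⟩ := hv
    obtain ⟨p, r, hp, hr, rfl⟩ := mem_polySpace.1 hv1
    -- Under `hcon`, no power of `X` pushes `(p, r)` beyond the degree bounds.
    have hpow : ∀ m : ℕ, ((X : F[X]) ^ m * p).degree < (a + 1 : ℕ) ∧ ((X : F[X]) ^ m * r).degree < (b + 1 : ℕ) ∧
        ![aeval α ((X : F[X]) ^ m * p), aeval α ((X : F[X]) ^ m * r)] ∈ Submodule.span E {u} := by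
      intro m
      induction m with
      | zero => simpa using ⟨hp, hr, hv2⟩
      | succ m ih =>
        obtain ⟨h1, h2, h3⟩ := ih
        obtain ⟨p', r', hp', hr', he⟩ := mem_polySpace.1
          (hcon _ ⟨mem_polySpace.2 ⟨_, _, h1, h2, rfl⟩, h3⟩).1
        have e0 : X ^ m * p = p' := eq_of_aeval_eq (α := α)
          (h1.trans_le (by exact_mod_cast (by omega)))
          (hp'.trans_le (by exact_mod_cast (by omega))) (congrFun he 0)
        have e1 : X ^ m * r = r' := eq_of_aeval_eq (α := α)
          (h2.trans_le (by exact_mod_cast (by omega)))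
          (hr'.trans_le (by exact_mod_cast (by omega))) (congrFun he 1)
        have hX : ∀ {f : F[X]} {n : ℕ}, f.degree < (n : ℕ) → ((X : F[X]) * f).degree < (n + 1 : ℕ) := by
          intro f n hf
          rw [degree_lt_iff_coeff_zero] at hf ⊢
          intro k hk
          obtain ⟨k, rfl⟩ := Nat.exists_eq_add_of_le' (Nat.one_le_of_lt hk)
          rw [coeff_X_mul]
          exact hf k (by omega)
        rw [pow_succ', mul_assoc, mul_assoc, e0, e1]
        refine ⟨hX hp', hX hr', ?_⟩
        have hs := Submodule.smul_mem _ α h3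
        rw [e0, e1] at hs
        simpa using hs
    have hzero : ∀ {f : F[X]} {n : ℕ}, ((X : F[X]) ^ n * f).degree < (n : ℕ) → f = 0 := by
      intro f n hf
      ext k
      have := (degree_lt_iff_coeff_zero _ _).1 hf (k + n) (by omega)
      rwa [coeff_X_pow_mul] at this
    apply hv0
    rw [hzero (hpow (a + 1)).1, hzero (hpow (b + 1)).2.1]
    ext i; fin_cases i <;> simp
  obtain ⟨hv1, hv2⟩ := hv
  obtain ⟨p, r, hp, hr, rfl⟩ := mem_polySpace.1 hv1
  refine finrank_eq_add_one hle ⟨hv1, hv2⟩ hvT ?_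
  rintro w ⟨hw1, hw2⟩
  obtain ⟨p', r', hp', hr', rfl⟩ := mem_polySpace.1 hw1
  have key := congrArg (fun f => coeff f (a + b)) (cross_mul_eq hab hp hr hp' hr' hv2 hw2)
  have nd : ∀ {f : F[X]} {n : ℕ}, f.degree < (n + 1 : ℕ) → f.natDegree ≤ n := fun {f n} hf =>
    natDegree_le_iff_coeff_eq_zero.2 fun N hN => (degree_lt_iff_coeff_zero _ _).1 hf N hN
  simp only [coeff_mul_add_eq_of_natDegree_le (nd hp) (nd hr'),
    coeff_mul_add_eq_of_natDegree_le (nd hp') (nd hr)] at key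
  have hne : p.coeff a ≠ 0 ∨ r.coeff b ≠ 0 := by
    by_contra! h0
    exact hvT ⟨mem_polySpace.2 ⟨p, r, degree_lt_of_coeff_eq_zero hp h0.1,
      degree_lt_of_coeff_eq_zero hr h0.2, rfl⟩, hv2⟩
  obtain ⟨c, hc1, hc2⟩ : ∃ c : F, p'.coeff a = c * p.coeff a ∧ r'.coeff b = c * r.coeff b := by
    rcases hne with h | h
    · refine ⟨p'.coeff a / p.coeff a, by field_simp, ?_⟩
      field_simp
      linear_combination key
    · refine ⟨r'.coeff b / r.coeff b, ?_, by field_simp⟩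
      field_simp
      linear_combination -key
  refine ⟨c, mem_polySpace.2 ⟨p' - c • p, r' - c • r, ?_, ?_, ?_⟩,
    Submodule.sub_mem _ hw2 (Submodule.smul_mem _ c hv2)⟩
  · apply degree_lt_of_coeff_eq_zero
    · rw [← mem_degreeLT] at *
      exact Submodule.sub_mem _ hp' (Submodule.smul_mem _ c hp)
    · simp [hc1]
  · apply degree_lt_of_coeff_eq_zero
    · rw [← mem_degreeLT] at *
      exact Submodule.sub_mem _ hr' (Submodule.smul_mem _ c hr)
    · simp [hc2]
  · ext i; fin_cases i <;> simp


lemma mem_linearSet_iff [Finite E] {U : Submodule F (Fin 2 → E)}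
    {W : Submodule E (Fin 2 → E)} :
    W ∈ linearSet U ↔ (∃ u, u ≠ 0 ∧ W = Submodule.span E {u}) ∧ 1 ≤ weightOf U W := by
  have hwt : 1 ≤ weightOf U W ↔ U ⊓ W.restrictScalars F ≠ ⊥ := by
    rw [weightOf, Nat.one_le_iff_ne_zero, Ne, Submodule.finrank_eq_zero]
  rw [hwt]
  constructor
  · rintro ⟨u, hu, hu0, rfl⟩
    refine ⟨⟨u, hu0, rfl⟩, fun h => hu0 ?_⟩
    rw [← Submodule.mem_bot F, ← h]
    exact ⟨hu, Submodule.mem_span_singleton_self u⟩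
  · rintro ⟨⟨u, hu0, rfl⟩, h⟩
    obtain ⟨v, ⟨hv1, hv2⟩, hv0⟩ := Submodule.exists_mem_ne_zero_of_ne_bot h
    refine ⟨v, hv1, hv0, ?_⟩
    obtain ⟨c, rfl⟩ := Submodule.mem_span_singleton.1 hv2
    have hc : c ≠ 0 := by rintro rfl; simp at hv0
    exact (Submodule.span_singleton_smul_eq (IsUnit.mk0 c hc) u).symm

lemma weightOf_mono [Finite E] {U U' : Submodule F (Fin 2 → E)} (h : U ≤ U')
    (W : Submodule E (Fin 2 → E)) : weightOf U W ≤ weightOf U' W :=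
  Submodule.finrank_mono (inf_le_inf_right _ h)

lemma weightOf_polySpace [Finite E] {α : E} {a b : ℕ} {u : Fin 2 → E} (j : ℕ)
    (hab : a + b + 2 * j ≤ (minpoly F α).natDegree + 1) :
    weightOf (polySpace F α a b) (Submodule.span E {u}) =
      weightOf (polySpace F α (a + j) (b + j)) (Submodule.span E {u}) - j := by
  induction j with
  | zero => simp
  | succ j ih =>
    rw [ih (by omega)]
    by_cases h : polySpace F α (a + j + 1) (b + j + 1) ⊓
        (Submodule.span E {u}).restrictScalars F = ⊥
    · have h0 : weightOf (polySpace F α (a + j + 1) (b + j + 1)) (Submodule.span E {u}) = 0 := by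
        rw [weightOf, h, finrank_bot]
      have := weightOf_mono (polySpace_mono (F := F) α (Nat.le_succ (a + j)) (Nat.le_succ (b + j)))
        (Submodule.span E {u})
      simp only [Nat.succ_eq_add_one, ← add_assoc] at *
      omega
    · have := weightOf_polySpace_succ (α := α) (a := a + j) (b := b + j) (by omega) u h
      simp only [← add_assoc] at *
      omega

/-- The points of weight more than `j` are the points of the linear set obtained by lowering both
degree bounds by `j`. -/
lemma linearSet_polySpace [Finite E] {α : E} {a b : ℕ} (j : ℕ)
    (hab : a + b + 2 * j ≤ (minpoly F α).natDegree + 1) :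
    linearSet (polySpace F α a b) = {W ∈ linearSet (polySpace F α (a + j) (b + j)) |
      j + 1 ≤ weightOf (polySpace F α (a + j) (b + j)) W} := by
  ext W
  simp only [Set.mem_ofPred_eq, mem_linearSet_iff]
  constructor
  · rintro ⟨⟨u, hu, rfl⟩, h⟩
    rw [weightOf_polySpace j hab] at h
    exact ⟨⟨⟨u, hu, rfl⟩, by omega⟩, by omega⟩
  · rintro ⟨⟨⟨u, hu, rfl⟩, -⟩, h⟩
    refine ⟨⟨u, hu, rfl⟩, ?_⟩
    rw [weightOf_polySpace j hab]
    omega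

/-! ### Counting points -/

/-- The points partition the nonzero vectors of `U`. Points outside the linear set contribute `0`,
so the sum may run over any finite set `S` of points that contains the linear set. -/
lemma sum_weightOf [Fintype F] [Finite E] (U : Submodule F (Fin 2 → E))
    (S : Finset (Submodule E (Fin 2 → E))) (hS : ∀ W ∈ S, ∃ u, u ≠ 0 ∧ W = Submodule.span E {u})
    (hU : linearSet U ⊆ S) :
    ∑ W ∈ S, ((Fintype.card F : ℤ) ^ weightOf U W - 1) =
      (Fintype.card F : ℤ) ^ Module.finrank F U - 1 := by
  classical
  have := Fintype.ofFinite E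
  have hcard : ∀ T : Submodule F (Fin 2 → E),
      (((Finset.univ.filter (· ∈ T)).erase 0).card : ℤ) =
        (Fintype.card F : ℤ) ^ Module.finrank F T - 1 := by
    intro T
    have h1 : (Finset.univ.filter (· ∈ T)).card = Fintype.card F ^ Module.finrank F T := by
      rw [← Module.card_eq_pow_finrank (K := F) (V := T), Fintype.card_subtype]
    rw [Finset.cast_card_erase_of_mem (by simp), h1]
    push_cast
    rfl
  rw [← hcard U, Finset.card_eq_sum_card_fiberwise
    (f := fun u => Submodule.span E {u}) (t := S)]
  · push_cast
    refine Finset.sum_congr rfl fun W hW => ?_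
    rw [weightOf, ← hcard]
    congr 2
    obtain ⟨w, hw, rfl⟩ := hS W hW
    ext u
    simp only [Finset.mem_erase, Finset.mem_filter, Finset.mem_univ, true_and, Submodule.mem_inf,
      Submodule.restrictScalars_mem]
    constructor
    · rintro ⟨h0, hu, h⟩
      obtain ⟨c, rfl⟩ := Submodule.mem_span_singleton.1 h
      have hc : c ≠ 0 := by rintro rfl; simp at h0
      exact ⟨⟨h0, hu⟩, Submodule.span_singleton_smul_eq (IsUnit.mk0 c hc) w⟩
    · rintro ⟨⟨h0, hu⟩, h⟩
      exact ⟨h0, hu, h ▸ Submodule.mem_span_singleton_self u⟩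
  · intro u hu
    simp only [Finset.coe_erase, Finset.coe_filter, Finset.mem_univ, true_and, Set.mem_sdiff,
      Set.mem_ofPred_eq, Set.mem_singleton_iff] at hu
    exact hU ⟨u, hu.1, hu.2, rfl⟩

/-- Writing `w` for the weight of a point in the larger of two consecutive spaces, its weight in
the smaller one is `w - 1`, and `q ^ w - 1 = q * (q ^ (w - 1) - 1) + (q - 1)`. Summing over the
points of the larger linear set determines their number. -/
lemma ncard_linearSet_polySpace [Fintype F] [Finite E] {α : E} {a b : ℕ}
    (hab : a + b + 1 ≤ (minpoly F α).natDegree) :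
    (linearSet (polySpace F α (a + 1) (b + 1))).ncard = Fintype.card F ^ (a + b + 1) + 1 := by
  classical
  set q := Fintype.card F with hq
  have hfin : (linearSet (polySpace F α (a + 1) (b + 1))).Finite := Set.toFinite _
  set S := hfin.toFinset with hSdef
  have hS : ∀ W ∈ S, ∃ u, u ≠ 0 ∧ W = Submodule.span E {u} := fun W hW =>
    (mem_linearSet_iff.1 (hfin.mem_toFinset.1 hW)).1
  have h1 := sum_weightOf (polySpace F α (a + 1) (b + 1)) S hS (by simp [S])
  have h0 := sum_weightOf (polySpace F α a b) S hS (by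
    rw [hSdef, hfin.coe_toFinset, linearSet_polySpace 1 (by omega)]
    exact Set.sep_subset _ _)
  rw [finrank_polySpace (by omega) (by omega)] at h0 h1
  rw [← hq] at h0 h1
  have hstep : ∑ W ∈ S, ((q : ℤ) ^ weightOf (polySpace F α (a + 1) (b + 1)) W - 1) =
      ∑ W ∈ S, (q * ((q : ℤ) ^ weightOf (polySpace F α a b) W - 1) + (q - 1)) := by
    refine Finset.sum_congr rfl fun W hW => ?_
    obtain ⟨⟨u, -, rfl⟩, hw⟩ := mem_linearSet_iff.1 (hfin.mem_toFinset.1 hW)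
    have := weightOf_polySpace (F := F) (α := α) (a := a) (b := b) (u := u) 1 (by omega)
    obtain ⟨n, hn⟩ := Nat.exists_eq_add_of_le' hw
    rw [this, hn, Nat.add_sub_cancel, pow_succ]
    ring
  rw [hstep, Finset.sum_add_distrib, ← Finset.mul_sum, h0, Finset.sum_const, nsmul_eq_mul] at h1
  have hq1 : (q : ℤ) - 1 ≠ 0 := by
    have : 1 < q := Fintype.one_lt_card
    omega
  rw [Set.ncard_eq_toFinset_card _ hfin]
  zify
  apply mul_right_cancel₀ hq1
  rw [← hSdef]
  linear_combination h1

/-- The number of points of weight at least `j`, for `1 ≤ j ≤ t1`. -/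
lemma ncard_le_weightOf [Fintype F] [Finite E] {α : E} {t1 t2 j : ℕ} (hj : 1 ≤ j) (hj1 : j ≤ t1)
    (h12 : t1 ≤ t2) (hs : t1 + t2 ≤ (minpoly F α).natDegree + 1) :
    {W ∈ linearSet (polySpace F α t1 t2) | j ≤ weightOf (polySpace F α t1 t2) W}.ncard =
      Fintype.card F ^ (t1 + t2 - 2 * j + 1) + 1 := by
  obtain ⟨j, rfl⟩ := Nat.exists_eq_add_of_le' hj
  obtain ⟨a, rfl⟩ := Nat.exists_eq_add_of_le' hj1
  obtain ⟨b, rfl⟩ := Nat.exists_eq_add_of_le' (hj1.trans h12)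
  have h := linearSet_polySpace (F := F) (α := α) (a := a + 1) (b := b + 1) j (by omega)
  have e : ∀ x : ℕ, x + 1 + j = x + (j + 1) := fun x => by omega
  rw [e, e] at h
  rw [← h, ncard_linearSet_polySpace (by omega)]
  congr 2
  omega

/-! ### Points of weight more than `t1` -/

/-- When the first degree bound is `0`, the linear set is the single point `⟨(0, 1)⟩`. -/
lemma linearSet_polySpace_zero [Finite E] {α : E} {d : ℕ} (hd : 1 ≤ d) :
    linearSet (polySpace F α 0 d) = {Submodule.span E {![0, 1]}} := by
  ext W
  rw [Set.mem_singleton_iff]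
  constructor
  · rintro ⟨u, hu, hu0, rfl⟩
    obtain ⟨p, r, hp, hr, rfl⟩ := mem_polySpace.1 hu
    have hp0 : p = 0 := by simpa using hp
    subst hp0
    have hr0 : aeval α r ≠ 0 := by
      intro h; apply hu0; ext i; fin_cases i <;> simp [h]
    rw [← Submodule.span_singleton_smul_eq (IsUnit.mk0 _ hr0) ![(0 : E), 1]]
    simp
  · rintro rfl
    refine ⟨![0, 1], mem_polySpace.2 ⟨0, 1, by simp, ?_, by simp⟩, ?_, rfl⟩
    · rw [degree_one]; exact_mod_cast hd
    · intro h
      simpa using congrFun h 1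

lemma weightOf_polySpace_zero {α : E} {d : ℕ} (hd : d ≤ (minpoly F α).natDegree) :
    weightOf (polySpace F α 0 d) (Submodule.span E {![0, 1]}) = d := by
  have hle : polySpace F α 0 d ≤ (Submodule.span E {![(0 : E), 1]}).restrictScalars F := by
    intro u hu
    obtain ⟨p, r, hp, hr, rfl⟩ := mem_polySpace.1 hu
    have hp0 : p = 0 := by simpa using hp
    subst hp0
    exact Submodule.mem_span_singleton.2 ⟨aeval α r, by simp⟩
  rw [weightOf, inf_eq_left.2 hle, finrank_polySpace (Nat.zero_le _) hd, zero_add]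

/-- The points of weight more than `t1` are those of the linear set with degree bounds `0` and
`t2 - t1`: none if `t1 = t2`, and only `⟨(0, 1)⟩` otherwise. -/
lemma linearSet_gt [Finite E] {α : E} {t1 t2 : ℕ} (h12 : t1 ≤ t2)
    (hs : t1 + t2 ≤ (minpoly F α).natDegree + 1) :
    {W ∈ linearSet (polySpace F α t1 t2) | t1 + 1 ≤ weightOf (polySpace F α t1 t2) W} =
      linearSet (polySpace F α 0 (t2 - t1)) := by
  have h := linearSet_polySpace (F := F) (α := α) (a := 0) (b := t2 - t1) t1 (by omega)
  rw [zero_add, Nat.sub_add_cancel h12] at h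
  exact h.symm

/-- The truncated subtraction is harmless: the second set is contained in the first. -/
lemma ncard_weightOf_eq [Finite E]
    (U : Submodule F (Fin 2 → E)) (i : ℕ) :
    {W ∈ linearSet U | weightOf U W = i}.ncard =
      {W ∈ linearSet U | i ≤ weightOf U W}.ncard -
        {W ∈ linearSet U | i + 1 ≤ weightOf U W}.ncard := by
  have hsub : {W ∈ linearSet U | i + 1 ≤ weightOf U W} ⊆ {W ∈ linearSet U | i ≤ weightOf U W} :=
    fun W hW => ⟨hW.1, Nat.le_of_succ_le hW.2⟩
  rw [← Set.ncard_sdiff hsub (Set.toFinite _)]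
  congr 1
  ext W
  simp only [Set.mem_ofPred_eq, Set.mem_sdiff]
  constructor
  · rintro ⟨h, rfl⟩; exact ⟨⟨h, le_rfl⟩, fun h' => by omega⟩
  · rintro ⟨⟨h, h1⟩, h2⟩
    refine ⟨h, ?_⟩
    by_contra h3
    exact h2 ⟨h, by omega⟩

end PolySpace

/-- weight distribution part of Theorem 2.6 of the paper. -/
theorem stmt6 (q h s t1 t2 k : ℕ) (F E : Type*) [Field F] [Fintype F] [Field E] [Fintype E]
    [Algebra F E] (hq : Fintype.card F = q) (hE : Fintype.card E = q ^ h)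
    (α : E) (hα : α ∉ Set.range (algebraMap F E)) (hs : (minpoly F α).natDegree = s)
    (ht1 : 1 ≤ t1) (ht12 : t1 ≤ t2) (hk : k = t1 + t2) (hks : k ≤ s + 1)
    (U : Submodule F (Fin 2 → E))
    (hU : (U : Set (Fin 2 → E)) =
      {v | ∃ p r : F[X], p.degree ≤ (t1 - 1 : ℕ) ∧ r.degree ≤ (t2 - 1 : ℕ) ∧
        v = ![aeval α p, aeval α r]}) :
    (∀ i, 1 ≤ i → i ≤ t1 - 1 →
      {W ∈ linearSet U | weightOf U W = i}.ncard = q ^ (k - 2 * i + 1) - q ^ (k - 2 * i - 1)) ∧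
    (t1 < t2 →
      {W ∈ linearSet U | weightOf U W = t1}.ncard = q ^ (t2 - t1 + 1) ∧
      {W ∈ linearSet U | weightOf U W = t2}.ncard = 1 ∧
      (∀ W ∈ linearSet U, 1 ≤ weightOf U W ∧ (weightOf U W ≤ t1 ∨ weightOf U W = t2))) ∧
    (t1 = t2 →
      {W ∈ linearSet U | weightOf U W = t1}.ncard = q + 1 ∧
      (∀ W ∈ linearSet U, 1 ≤ weightOf U W ∧ weightOf U W ≤ t1)) := by
  subst hk hs hq
  have hUeq : U = polySpace F α t1 t2 := by
    ext v
    rw [← SetLike.mem_coe, hU, mem_polySpace]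
    have hdeg : ∀ {f : F[X]} {n : ℕ}, 1 ≤ n → (f.degree ≤ (n - 1 : ℕ) ↔ f.degree < (n : ℕ)) := by
      intro f n hn
      rw [degree_lt_iff_coeff_zero, degree_le_iff_coeff_zero]
      constructor
      · intro h m hm
        exact h m (by exact_mod_cast (by omega))
      · intro h m hm
        have hm' : n - 1 < m := by exact_mod_cast hm
        exact h m (by omega)
    simp only [Set.mem_ofPred_eq, hdeg ht1, hdeg (ht1.trans ht12)]
  clear hU
  subst hUeq
  refine ⟨fun i hi hi1 => ?_, fun hlt => ?_, fun heq => ?_⟩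
  · rw [ncard_weightOf_eq, ncard_le_weightOf hi (by omega) ht12 hks,
      ncard_le_weightOf (by omega) (by omega) ht12 hks]
    rw [Nat.add_sub_add_right]
    congr 2
    omega
  · have hgt := linearSet_gt (F := F) (α := α) ht12 hks
    rw [linearSet_polySpace_zero (by omega)] at hgt
    have hP : weightOf (polySpace F α t1 t2) (Submodule.span E {![0, 1]}) = t2 := by
      have h := weightOf_polySpace (F := F) (α := α) (a := 0) (b := t2 - t1)
        (u := ![(0 : E), 1]) t1 (by omega)
      rw [weightOf_polySpace_zero (by omega), zero_add, Nat.sub_add_cancel ht12] at h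
      omega
    refine ⟨?_, ?_, fun W hW => ⟨(mem_linearSet_iff.1 hW).2, ?_⟩⟩
    · rw [ncard_weightOf_eq, ncard_le_weightOf ht1 le_rfl ht12 hks, hgt, Set.ncard_singleton,
        Nat.add_sub_cancel]
      congr 1
      omega
    · rw [Set.ncard_eq_one]
      refine ⟨Submodule.span E {![0, 1]}, ?_⟩
      ext W
      rw [Set.mem_singleton_iff]
      constructor
      · rintro ⟨hW, hw⟩
        have : W ∈ ({Submodule.span E {![0, 1]}} : Set (Submodule E (Fin 2 → E))) :=
          hgt ▸ ⟨hW, by omega⟩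
        exact this
      · rintro rfl
        exact ⟨mem_linearSet_iff.2 ⟨⟨_, fun h => by simpa using congrFun h 1, rfl⟩, by omega⟩, hP⟩
    · by_cases h : weightOf (polySpace F α t1 t2) W ≤ t1
      · exact Or.inl h
      · have : W ∈ ({Submodule.span E {![0, 1]}} : Set (Submodule E (Fin 2 → E))) :=
          hgt ▸ ⟨hW, by omega⟩
        rw [Set.mem_singleton_iff.1 this]
        exact Or.inr hP
  · subst heq
    have hgt := linearSet_gt (F := F) (α := α) ht12 hks
    have hempty : linearSet (polySpace F α 0 (t1 - t1)) = ∅ := by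
      rw [Set.eq_empty_iff_forall_notMem]
      rintro W ⟨u, hu, hu0, -⟩
      obtain ⟨p, r, hp, hr, rfl⟩ := mem_polySpace.1 hu
      have hp0 : p = 0 := by simpa using hp
      have hr0 : r = 0 := by simpa using hr
      subst hp0 hr0
      apply hu0
      ext i; fin_cases i <;> simp
    rw [hempty] at hgt
    refine ⟨?_, fun W hW => ⟨(mem_linearSet_iff.1 hW).2, ?_⟩⟩
    · rw [ncard_weightOf_eq, ncard_le_weightOf ht1 le_rfl le_rfl hks, hgt, Set.ncard_empty,
        Nat.sub_zero, ← two_mul, Nat.sub_self, zero_add, pow_one]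
    · by_contra h
      have : W ∈ (∅ : Set (Submodule E (Fin 2 → E))) := hgt ▸ ⟨hW, by omega⟩
      exact this
end

section
/- Let F_q be the finite field with q elements, F_{q^h} an extension, and α ∈ F_{q^h} \ F_q with [F_q(α):F_q] = s. Let l ≥ 1 and let t1, …, t_{l+1} ≥ 1 be integers with t_i + t_j ≤ s + 1 for all i ≠ j, and set k = t1 + … + t_{l+1}. Let U = {(f1(α), …, f_{l+1}(α)) : f_i ∈ F_q[X], deg(f_i) ≤ t_i−1 for all i}, an F_q-subspace of (F_{q^h})^{l+1}, and let L = L_U = {⟨u⟩ : u ∈ U \ {0}} ⊆ PG(l,q^h). Then dim_{F_q} U = k (i.e., L is an F_q-linear set of rank k) and L has exactly q^{k−1} + q^{k−2} + … + q^{k−l} + 1 points. -/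
/-!
The proof works with tuples of polynomials. Let `V t` be the space of tuples `f` with
`deg f_i < t_i`. Since `t_i ≤ s`, evaluation at `α` is injective on `V t`, so `U` has dimension
`∑ t_i = k`.

Since `t_i + t_j - 2 < s` for `i ≠ j`, two nonzero tuples `f, g ∈ V t` determine the same
projective point iff `f_i g_j = f_j g_i` holds for all `i, j` in `F[X]`
(`evalTuple_mem_span_iff`). The tuples giving the point of `g` (and `0`) thus form the space
`propTo t g` of tuples in `V t` proportional to `g`. Not all of these vanish at `X = 0` (divide `g`
by a power of `X`), and by proportionality a single coordinate, evaluated at `0`, detects whether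
`f ∈ propTo t g` vanishes at `0`. The kernel of that functional is `X • propTo (t - 1) g`, so
`dim propTo t g = dim propTo (t - 1) g + 1` (`finrank_propTo`).

If `N` is the number of points, summing `|propTo t g| - 1` and `|propTo (t - 1) g| - 1` over all
points gives `q^k - 1 + N = q (q^(k-l-1) - 1 + N)`, which determines `N`.
-/

open Polynomial

/-! ### Proportional tuples of polynomials -/

section PolynomialTuples

variable {F ι : Type*} [Field F]

/-- Tuples of polynomials whose `i`-th entry has degree less than `t i`. -/
noncomputable def tuplesLT (F : Type*) {ι : Type*} [Field F] (t : ι → ℕ) : Submodule F (ι → F[X]) :=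
  Submodule.pi Set.univ fun i => degreeLT F (t i)

lemma mem_tuplesLT {t : ι → ℕ} {f : ι → F[X]} :
    f ∈ tuplesLT F t ↔ ∀ i, (f i).degree < t i := by
  simp [tuplesLT, Submodule.mem_pi, mem_degreeLT]

/-- The tuples in `tuplesLT F t` that are proportional to `g` over `F(X)`. -/
noncomputable def propTo (t : ι → ℕ) (g : ι → F[X]) : Submodule F (ι → F[X]) where
  carrier := {f | f ∈ tuplesLT F t ∧ ∀ i j, f i * g j = f j * g i}
  zero_mem' := ⟨zero_mem _, by simp⟩
  add_mem' := by
    rintro a b ⟨ha, ha'⟩ ⟨hb, hb'⟩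
    refine ⟨add_mem ha hb, fun i j => ?_⟩
    simp [add_mul, ha' i j, hb' i j]
  smul_mem' := by
    rintro c a ⟨ha, ha'⟩
    refine ⟨Submodule.smul_mem _ _ ha, fun i j => ?_⟩
    simp [ha' i j]

lemma mem_propTo {t : ι → ℕ} {f g : ι → F[X]} :
    f ∈ propTo t g ↔ f ∈ tuplesLT F t ∧ ∀ i j, f i * g j = f j * g i := Iff.rfl

lemma range_degreeLT_tuples (t : ι → ℕ) :
    LinearMap.range (LinearMap.pi (fun i => (degreeLT F (t i)).subtype ∘ₗ LinearMap.proj i) :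
      (∀ i, degreeLT F (t i)) →ₗ[F] (ι → F[X])) = tuplesLT F t := by
  ext f
  simp only [LinearMap.mem_range, mem_tuplesLT]
  constructor
  · rintro ⟨y, rfl⟩ i
    exact mem_degreeLT.1 (y i).2
  · intro h
    exact ⟨fun i => ⟨f i, mem_degreeLT.2 (h i)⟩, rfl⟩

instance finite_degreeLT (n : ℕ) : Module.Finite F (degreeLT F n) :=
  Module.Finite.equiv (degreeLTEquiv F n).symm

instance finite_tuplesLT [Fintype ι] (t : ι → ℕ) : Module.Finite F (tuplesLT F t) := by
  rw [← range_degreeLT_tuples]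
  infer_instance

lemma finrank_tuplesLT [Fintype ι] (t : ι → ℕ) :
    Module.finrank F (tuplesLT F t) = ∑ i, t i := by
  rw [← range_degreeLT_tuples, LinearMap.finrank_range_of_inj]
  · rw [Module.finrank_pi_fintype]
    refine Finset.sum_congr rfl fun i _ => ?_
    rw [(degreeLTEquiv F (t i)).finrank_eq, Module.finrank_fin_fun]
  · intro x y hxy
    funext i
    exact Subtype.ext (congrFun hxy i)

instance finite_propTo [Fintype ι] (t : ι → ℕ) (g : ι → F[X]) :
    Module.Finite F (propTo t g) :=
  Submodule.finiteDimensional_of_le (S₂ := tuplesLT F t) fun _ h => h.1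

/-- Proportionality to a common nonzero tuple is transitive. -/
lemma propTo_cross {t : ι → ℕ} {g a b : ι → F[X]} (hg : g ≠ 0)
    (ha : a ∈ propTo t g) (hb : b ∈ propTo t g) (i j : ι) : a i * b j = a j * b i := by
  obtain ⟨m, hm⟩ := Function.ne_iff.1 hg
  have hm' : g m ≠ 0 := hm
  apply mul_right_cancel₀ (mul_ne_zero hm' hm')
  linear_combination (b j * g m) * ha.2 i m + (a m * g i) * hb.2 j m
    - (b i * g m) * ha.2 j m - (a m * g j) * hb.2 i m

lemma degree_X_mul_lt {p : F[X]} {n : ℕ} (hn : 1 ≤ n) :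
    (X * p).degree < (n : WithBot ℕ) ↔ p.degree < (n - 1 : ℕ) := by
  obtain ⟨n, rfl⟩ := Nat.exists_eq_add_of_le' hn
  by_cases hp : p = 0
  · simp [hp]
  · have hXp : X * p ≠ 0 := mul_ne_zero X_ne_zero hp
    rw [← natDegree_lt_iff_degree_lt hXp, ← natDegree_lt_iff_degree_lt hp, natDegree_X_mul hp]
    omega

/-- Dividing a nonzero tuple by the largest possible power of `X` gives a proportional tuple,
of no larger degrees, that does not vanish at `0`. The induction is on the degree `n` of a nonzero entry `g m`. -/
lemma exists_coeff_zero_ne {t : ι → ℕ} (ht : ∀ i, 1 ≤ t i) (m : ι) (n : ℕ) :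
    ∀ g : ι → F[X], g ∈ tuplesLT F t → g m ≠ 0 → (g m).natDegree = n →
      ∃ a ∈ propTo t g, ∃ j, (a j).coeff 0 ≠ 0 := by
  induction n with
  | zero =>
    intro g hg hm hn
    refine ⟨g, ⟨hg, fun i j => mul_comm _ _⟩, m, fun h => hm ?_⟩
    rw [eq_C_of_natDegree_eq_zero hn, h, C_0]
  | succ n ih =>
    intro g hg hm hn
    by_cases h : ∃ j, (g j).coeff 0 ≠ 0
    · exact ⟨g, ⟨hg, fun i j => mul_comm _ _⟩, h⟩
    · push Not at h
      have hX : ∀ i, X * divX (g i) = g i := fun i => by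
        conv_rhs => rw [← divX_mul_X_add (g i), h i]
        simp [mul_comm]
      have hdeg : ∀ i, (divX (g i)).degree < t i := fun i => by
        have h1 := mem_tuplesLT.1 hg i
        rw [← hX i, degree_X_mul_lt (ht i)] at h1
        exact h1.trans_le (by exact_mod_cast Nat.sub_le _ _)
      obtain ⟨a, ha, j, hj⟩ := ih (fun i => divX (g i)) (mem_tuplesLT.2 hdeg)
        (fun h0 => hm (by rw [← hX m, h0, mul_zero]))
        (by rw [natDegree_divX_eq_natDegree_tsub_one, hn]; rfl)
      refine ⟨a, ⟨ha.1, fun i j => ?_⟩, j, hj⟩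
      rw [← hX i, ← hX j]
      linear_combination X * ha.2 i j

/-- Lowering every degree bound by one lowers the dimension of the space of tuples proportional
to `g` by exactly one. -/
lemma finrank_propTo [Fintype ι] {t : ι → ℕ} (ht : ∀ i, 1 ≤ t i) {g : ι → F[X]}
    (hgt : g ∈ tuplesLT F t) (hg : g ≠ 0) :
    Module.finrank F (propTo t g) = Module.finrank F (propTo (fun i => t i - 1) g) + 1 := by
  obtain ⟨m, hm⟩ := Function.ne_iff.1 hg
  obtain ⟨a, ha, j, hj⟩ := exists_coeff_zero_ne ht m _ g hgt hm rfl
  -- `ev f` is the value of the `j`-th entry of `f` at `0`.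
  let ev : propTo t g →ₗ[F] F := (lcoeff F 0 ∘ₗ LinearMap.proj j) ∘ₗ (propTo t g).subtype
  have hev : ∀ f, ev f = ((f : ι → F[X]) j).coeff 0 := fun f => rfl
  have hsurj : Function.Surjective ev := by
    intro c
    refine ⟨(c / (a j).coeff 0) • ⟨a, ha⟩, ?_⟩
    rw [map_smul, hev, smul_eq_mul]
    exact div_mul_cancel₀ _ hj
  let mulX : propTo (fun i => t i - 1) g →ₗ[F] propTo t g :=
    { toFun := fun f => ⟨fun i => X * (f : ι → F[X]) i,
        mem_tuplesLT.2 fun i => (degree_X_mul_lt (ht i)).2 (mem_tuplesLT.1 f.2.1 i),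
        fun i j => by linear_combination X * f.2.2 i j⟩
      map_add' := fun f f' => by
        ext1; funext i; simp [mul_add]
      map_smul' := fun c f => by
        ext1; funext i; simp }
  have hmulX : ∀ f i, (mulX f : ι → F[X]) i = X * (f : ι → F[X]) i := fun f i => rfl
  have hinj : Function.Injective mulX := by
    intro f f' h
    ext1; funext i
    have := congrFun (congrArg Subtype.val h) i
    rw [hmulX, hmulX] at this
    exact mul_left_cancel₀ X_ne_zero this
  have hker : LinearMap.range mulX = LinearMap.ker ev := by
    ext f
    rw [LinearMap.mem_range, LinearMap.mem_ker]
    constructor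
    · rintro ⟨f, rfl⟩
      rw [hev, hmulX]
      simp
    · intro h
      rw [hev] at h
      have h0 : ∀ i, ((f : ι → F[X]) i).coeff 0 = 0 := fun i => by
        have h1 := congrArg (fun p => coeff p 0) (propTo_cross hg f.2 ha i j)
        simp only [mul_coeff_zero, h, zero_mul] at h1
        exact (mul_eq_zero.1 h1).resolve_right hj
      have hX : ∀ i, X * divX ((f : ι → F[X]) i) = (f : ι → F[X]) i := fun i => by
        conv_rhs => rw [← divX_mul_X_add ((f : ι → F[X]) i), h0 i]
        simp [mul_comm]
      refine ⟨⟨fun i => divX ((f : ι → F[X]) i), mem_tuplesLT.2 fun i => ?_, fun i j => ?_⟩, ?_⟩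
      · rw [← degree_X_mul_lt (ht i), hX]
        exact mem_tuplesLT.1 f.2.1 i
      · apply mul_left_cancel₀ (X_ne_zero (R := F))
        rw [← mul_assoc, ← mul_assoc, hX, hX]
        exact f.2.2 i j
      · ext1; funext i
        rw [hmulX]
        exact hX i
  rw [← LinearMap.finrank_range_add_finrank_ker ev, ← hker, LinearMap.finrank_range_of_inj hinj,
    LinearMap.range_eq_top.2 hsurj, finrank_top, Module.finrank_self, add_comm]

end PolynomialTuples

/-! ### Evaluation at `α` and projective points -/

section Evaluation

variable {F E ι : Type*} [Field F] [Field E] [Algebra F E]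

/-- Evaluation of a tuple of polynomials at `α`. -/
noncomputable def evalTuple (α : E) : (ι → F[X]) →ₗ[F] (ι → E) :=
  LinearMap.pi fun i => (aeval α).toLinearMap ∘ₗ LinearMap.proj i

lemma evalTuple_apply (α : E) (f : ι → F[X]) (i : ι) : evalTuple α f i = aeval α (f i) := rfl

lemma eq_zero_of_aeval {α : E} {p : F[X]} (hp : p.degree < (minpoly F α).natDegree)
    (h : aeval α p = 0) : p = 0 := by
  by_contra h0
  have h1 := natDegree_le_of_dvd (minpoly.dvd F α h) h0
  rw [← natDegree_lt_iff_degree_lt h0] at hp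
  omega

lemma evalTuple_injOn {α : E} {t : ι → ℕ} (ht : ∀ i, t i ≤ (minpoly F α).natDegree) :
    Set.InjOn (evalTuple (F := F) α) (tuplesLT F t : Set (ι → F[X])) := by
  intro f hf g hg h
  have hfg : f - g ∈ tuplesLT F t := sub_mem hf hg
  funext i
  refine sub_eq_zero.1 (eq_zero_of_aeval (α := α)
    ((mem_tuplesLT.1 hfg i).trans_le (by exact_mod_cast ht i)) ?_)
  have := congrFun h i
  rw [evalTuple_apply, evalTuple_apply] at this
  rw [map_sub, this, sub_self]

/-- The point of `g` contains `f(α)` iff `f` is proportional to `g`: a cross product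
`f_i g_j - f_j g_i` with `i ≠ j` has degree at most `t_i + t_j - 2`, less than that of the minimal
polynomial of `α`. -/
lemma evalTuple_mem_span_iff {α : E} {t : ι → ℕ} (ht : ∀ i, t i ≤ (minpoly F α).natDegree)
    (hpair : ∀ i j, i ≠ j → t i + t j ≤ (minpoly F α).natDegree + 1)
    {f g : ι → F[X]} (hf : f ∈ tuplesLT F t) (hg : g ∈ tuplesLT F t) (hg0 : g ≠ 0) :
    evalTuple α f ∈ Submodule.span E {evalTuple α g} ↔ ∀ i j, f i * g j = f j * g i := by
  rw [Submodule.mem_span_singleton]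
  constructor
  · rintro ⟨c, hc⟩ i j
    by_cases hij : i = j
    · rw [hij]
    have hci : ∀ i, aeval α (f i) = c * aeval α (g i) := fun i => by
      rw [← evalTuple_apply, ← hc]; rfl
    have hdeg : ∀ p r : F[X], p.degree < t i → r.degree < t j →
        (p * r).degree < (minpoly F α).natDegree := by
      intro p r hp hr
      by_cases h0 : p * r = 0
      · rw [h0, degree_zero]; exact WithBot.bot_lt_coe _
      have hp0 := left_ne_zero_of_mul h0
      have hr0 := right_ne_zero_of_mul h0
      rw [← natDegree_lt_iff_degree_lt hp0] at hp
      rw [← natDegree_lt_iff_degree_lt hr0] at hr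
      rw [← natDegree_lt_iff_degree_lt h0, natDegree_mul hp0 hr0]
      have := hpair i j hij
      omega
    rw [mem_tuplesLT] at hf hg
    refine sub_eq_zero.1 (eq_zero_of_aeval (α := α) ?_ ?_)
    · refine (degree_sub_le _ _).trans_lt (max_lt (hdeg _ _ (hf i) (hg j)) ?_)
      rw [mul_comm]
      exact hdeg _ _ (hg i) (hf j)
    · simp only [map_sub, map_mul, hci]
      ring
  · intro h
    obtain ⟨m, hm⟩ := Function.ne_iff.1 hg0
    have hm' : aeval α (g m) ≠ 0 := fun h0 => hm <| eq_zero_of_aeval (α := α)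
      ((mem_tuplesLT.1 hg m).trans_le (by exact_mod_cast ht m)) h0
    refine ⟨aeval α (f m) / aeval α (g m), ?_⟩
    funext i
    have h1 := congrArg (aeval α) (h i m)
    rw [map_mul, map_mul] at h1
    rw [Pi.smul_apply, evalTuple_apply, evalTuple_apply, smul_eq_mul, div_mul_eq_mul_div,
      div_eq_iff hm', h1]

end Evaluation

/-! ### Counting points -/

lemma geom_sum_top (q k l : ℕ) (h : l ≤ k) :
    q * (∑ i ∈ Finset.range l, q ^ (k - 1 - i)) + q ^ (k - l)
      = (∑ i ∈ Finset.range l, q ^ (k - 1 - i)) + q ^ k := by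
  induction l with
  | zero => simp
  | succ l ih =>
    have h1 := ih (by omega)
    have h2 : k - l = (k - 1 - l) + 1 := by omega
    have h3 : k - (l + 1) = k - 1 - l := by omega
    rw [h2, pow_succ] at h1
    rw [Finset.sum_range_succ, h3]
    linarith

/-- Theorem 2.13 of the paper. With
`U = {(f1(α), …, f_{l+1}(α)) : deg f_i ≤ t_i - 1}`, where `t_i + t_j ≤ s + 1` for `i ≠ j`
and `k = t1 + … + t_{l+1}`, `U` has `F_q`-dimension `k` and the linear set `L_U` in
`PG(l, q^h)` has exactly `q^(k-1) + q^(k-2) + … + q^(k-l) + 1` points. -/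
theorem stmt9 (q h s l k : ℕ) (F E : Type*) [Field F] [Fintype F] [Field E] [Fintype E]
    [Algebra F E] (hq : Fintype.card F = q) (hE : Fintype.card E = q ^ h)
    (α : E) (hα : α ∉ Set.range (algebraMap F E)) (hs : (minpoly F α).natDegree = s)
    (hl : 1 ≤ l) (t : Fin (l + 1) → ℕ) (ht : ∀ i, 1 ≤ t i)
    (hpair : ∀ i j, i ≠ j → t i + t j ≤ s + 1) (hk : k = ∑ i, t i)
    (U : Submodule F (Fin (l + 1) → E))
    (hU : (U : Set (Fin (l + 1) → E)) =
      {v | ∃ f : Fin (l + 1) → F[X], (∀ i, (f i).degree ≤ (t i - 1 : ℕ)) ∧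
        v = fun i => aeval α (f i)}) :
    Module.finrank F U = k ∧
    (linearSet U).ncard = (∑ i ∈ Finset.range l, q ^ (k - 1 - i)) + 1 := by
  classical
  subst hq hs hk
  have hts : ∀ i, t i ≤ (minpoly F α).natDegree := fun i => by
    have : Nontrivial (Fin (l + 1)) := Fin.nontrivial_iff_two_le.2 (by omega)
    obtain ⟨j, hj⟩ := exists_ne i
    have h1 := hpair i j hj.symm
    have h2 := ht j
    omega
  set q := Fintype.card F with hq
  set k := ∑ i, t i with hk
  have hq1 : 1 < q := Fintype.one_lt_card
  have hq' : Nat.card F = q := Nat.card_eq_fintype_card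
  have hinj := evalTuple_injOn (F := F) hts
  have hUmap : U = (tuplesLT F t).map (evalTuple α) := by
    apply SetLike.coe_injective
    rw [hU, Submodule.map_coe]
    have hdeg : ∀ (p : F[X]) i, p.degree ≤ (t i - 1 : ℕ) ↔ p.degree < t i := fun p i => by
      rw [← natDegree_le_iff_degree_le]
      by_cases h0 : p = 0
      · simp [h0]
      rw [← natDegree_lt_iff_degree_lt h0]
      have := ht i
      omega
    ext v
    constructor
    · rintro ⟨f, hf, rfl⟩
      exact ⟨f, mem_tuplesLT.2 fun i => (hdeg _ i).1 (hf i), rfl⟩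
    · rintro ⟨f, hf, rfl⟩
      exact ⟨f, fun i => (hdeg _ i).2 (mem_tuplesLT.1 hf i), rfl⟩
  refine ⟨?_, ?_⟩
  · rw [hUmap, ← LinearMap.range_domRestrict, LinearMap.finrank_range_of_inj, finrank_tuplesLT]
    intro x y hxy
    exact Subtype.ext (hinj x.2 y.2 hxy)
  have hkl : l + 1 ≤ k := by
    calc l + 1 = ∑ i : Fin (l + 1), 1 := by simp
      _ ≤ k := Finset.sum_le_sum fun i _ => ht i
  have hcard : ∀ A : Submodule F (Fin (l + 1) → F[X]), Module.Finite F A →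
      Nat.card A = q ^ Module.finrank F A := fun A _ => by
    rw [← hq', Module.natCard_eq_pow_finrank (K := F)]
  have hfin : ∀ A : Submodule F (Fin (l + 1) → F[X]), Module.Finite F A →
      (A : Set (Fin (l + 1) → F[X])).Finite := fun A _ =>
    haveI : Finite A := Module.finite_of_finite F
    Set.toFinite _
  set t' : Fin (l + 1) → ℕ := fun i => t i - 1 with ht'
  have hle : tuplesLT F t' ≤ tuplesLT F t := fun f hf => mem_tuplesLT.2 fun i =>
    (mem_tuplesLT.1 hf i).trans_le (by exact_mod_cast Nat.sub_le _ _)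
  let S : Finset (Fin (l + 1) → F[X]) := (hfin (tuplesLT F t) inferInstance).toFinset.erase 0
  let S' : Finset (Fin (l + 1) → F[X]) := (hfin (tuplesLT F t') inferInstance).toFinset.erase 0
  have hmemS : ∀ f, f ∈ S ↔ f ≠ 0 ∧ f ∈ tuplesLT F t := fun f => by simp [S]
  have hmemS' : ∀ f, f ∈ S' ↔ f ≠ 0 ∧ f ∈ tuplesLT F t' := fun f => by simp [S']
  -- A finset consisting of the nonzero elements of a space has one element less than the space.
  have herase : ∀ (A : Submodule F (Fin (l + 1) → F[X])) (T : Finset (Fin (l + 1) → F[X])),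
      Module.Finite F A → (∀ f, f ∈ T ↔ f ≠ 0 ∧ f ∈ A) →
      T.card + 1 = q ^ Module.finrank F A := by
    intro A T hA hT
    rw [← hcard A hA]
    have h0 : (0 : Fin (l + 1) → F[X]) ∉ T := fun h => ((hT 0).1 h).1 rfl
    rw [← Finset.card_insert_of_notMem h0]
    have : (A : Set (Fin (l + 1) → F[X])) = ((insert 0 T : Finset _) : Set _) := by
      ext f
      by_cases hf : f = 0
      · simp [hf]
      · simp [hf, hT]
    rw [← Set.ncard_coe_finset, ← this]
    rfl
  have hS : S.card + 1 = q ^ k := by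
    rw [herase _ S inferInstance hmemS, finrank_tuplesLT]
  have hS' : S'.card + 1 = q ^ (k - (l + 1)) := by
    rw [herase _ S' inferInstance hmemS', finrank_tuplesLT]
    congr 1
    have h1 : k = ∑ i, (t' i + 1) :=
      Finset.sum_congr rfl fun i _ => by have := ht i; simp only [ht']; omega
    rw [h1, Finset.sum_add_distrib]
    simp
  let pt : (Fin (l + 1) → F[X]) → Submodule E (Fin (l + 1) → E) :=
    fun f => Submodule.span E {evalTuple α f}
  have hφ0 : ∀ f ∈ S, evalTuple α f ≠ 0 := fun f hf h0 =>
    ((hmemS f).1 hf).1 (hinj ((hmemS f).1 hf).2 (zero_mem _) (by rw [h0, map_zero]))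
  have hL : linearSet U = ((S.image pt : Finset _) : Set (Submodule E (Fin (l + 1) → E))) := by
    ext W
    simp only [linearSet, Set.mem_ofPred_eq, Finset.coe_image, Set.mem_image, Finset.mem_coe]
    constructor
    · rintro ⟨u, hu, hu0, rfl⟩
      rw [hUmap] at hu
      obtain ⟨f, hf, rfl⟩ := hu
      refine ⟨f, (hmemS f).2 ⟨?_, hf⟩, rfl⟩
      rintro rfl
      exact hu0 (map_zero _)
    · rintro ⟨f, hf, rfl⟩
      refine ⟨evalTuple α f, ?_, hφ0 f hf, rfl⟩
      rw [hUmap]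
      exact Submodule.mem_map_of_mem ((hmemS f).1 hf).2
  rw [hL, Set.ncard_coe_finset]
  have hpt : ∀ f ∈ S, ∀ g ∈ S, (pt f = pt g ↔ ∀ i j, f i * g j = f j * g i) := by
    intro f hf g hg
    rw [← evalTuple_mem_span_iff hts hpair ((hmemS f).1 hf).2 ((hmemS g).1 hg).2
      ((hmemS g).1 hg).1]
    constructor
    · intro h
      change evalTuple α f ∈ pt g
      rw [← h]
      exact Submodule.mem_span_singleton_self _
    · intro h
      obtain ⟨c, hc⟩ := Submodule.mem_span_singleton.1 h
      have hc0 : c ≠ 0 := by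
        rintro rfl
        exact hφ0 f hf (by rw [← hc, zero_smul])
      change Submodule.span E {evalTuple α f} = _
      rw [← hc]
      exact Submodule.span_singleton_smul_eq (IsUnit.mk0 c hc0) _
  have hSS : ∀ f ∈ S', f ∈ S := fun f hf =>
    (hmemS f).2 ⟨((hmemS' f).1 hf).1, hle ((hmemS' f).1 hf).2⟩
  have hfib : ∀ W ∈ S.image pt, (S.filter fun f => pt f = W).card + 1 =
      q * ((S'.filter fun f => pt f = W).card + 1) := by
    intro W hW
    obtain ⟨g, hg, rfl⟩ := Finset.mem_image.1 hW
    rw [herase (propTo t g) _ inferInstance, herase (propTo t' g) _ inferInstance,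
      finrank_propTo ht ((hmemS g).1 hg).2 ((hmemS g).1 hg).1, pow_succ, mul_comm]
    · intro f
      rw [Finset.mem_filter, mem_propTo, hmemS', ← and_assoc]
      refine and_congr_right fun h => ?_
      exact hpt f (hSS f ((hmemS' f).2 h)) g hg
    · intro f
      rw [Finset.mem_filter, mem_propTo, hmemS, ← and_assoc]
      refine and_congr_right fun h => ?_
      exact hpt f ((hmemS f).2 h) g hg
  have hsum := Finset.sum_congr (rfl : S.image pt = S.image pt) hfib
  rw [← Finset.mul_sum, Finset.sum_add_distrib, Finset.sum_add_distrib,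
    ← Finset.card_eq_sum_card_fiberwise (fun f hf => Finset.mem_image_of_mem pt hf),
    ← Finset.card_eq_sum_card_fiberwise (fun f hf => Finset.mem_image_of_mem pt (hSS f hf)),
    Finset.sum_const, smul_eq_mul, mul_one] at hsum
  have hgeom := geom_sum_top q k l (by omega)
  have hpow : q ^ (k - l) = q * q ^ (k - (l + 1)) := by
    rw [← pow_succ']
    congr 1
    omega
  rw [hpow, ← hS, ← hS'] at hgeom
  generalize (S.image pt).card = N at hsum ⊢
  generalize (∑ i ∈ Finset.range l, q ^ (k - 1 - i)) = G at hgeom ⊢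
  -- `hsum` and `hgeom` together say `(q - 1) * N = (q - 1) * (G + 1)`.
  zify at hsum hgeom hq1 ⊢
  have hne : (q : ℤ) - 1 ≠ 0 := by omega
  apply mul_left_cancel₀ hne
  linear_combination -hgeom - hsum
end
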